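/- (Baracco–Zaitsev–Zampieri) Let f : 𝔻 → 𝔻 be holomorphic and let (z_n) be a sequence in 𝔻 converging to 1 nontangentially, i.e. z_n → 1 and there is a constant M > 0 with |1 − z_n| ≤ M (1 − |z_n|) for all n. If f(z_n) = z_n + o(|1 − z_n|³) as n → ∞ (i.e. (f(z_n) − z_n)/|1 − z_n|³ → 0), then f(z) = z for all z ∈ 𝔻. -/

import Mathlib

open Metric Filter

lemma bzz_id (a b : ℂ) : ‖1 - (starRingEnd ℂ) a * b‖ ^ 2 - ‖b - a‖ ^ 2
    = (1 - ‖a‖ ^ 2) * (1 - ‖b‖ ^ 2) := by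
  simp only [← Complex.normSq_eq_norm_sq, Complex.normSq_apply, Complex.sub_re, Complex.sub_im,
    Complex.mul_re, Complex.mul_im, Complex.conj_re, Complex.conj_im, Complex.one_re,
    Complex.one_im]
  ring

lemma bzz_pos {a b : ℂ} (ha : ‖a‖ < 1) (hb : ‖b‖ < 1) : 0 < (1 - ‖a‖ ^ 2) * (1 - ‖b‖ ^ 2) := by
  have h1 := norm_nonneg a
  have h2 := norm_nonneg b
  apply mul_pos <;> nlinarith

lemma bzz_ne {a b : ℂ} (ha : ‖a‖ < 1) (hb : ‖b‖ < 1) : 1 - (starRingEnd ℂ) a * b ≠ 0 := by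
  intro h
  have := bzz_id a b
  rw [h] at this
  have h3 := bzz_pos ha hb
  simp only [norm_zero] at this
  nlinarith [sq_nonneg ‖b - a‖]

lemma bzz_lt {a b : ℂ} (ha : ‖a‖ < 1) (hb : ‖b‖ < 1) :
    ‖(b - a) / (1 - (starRingEnd ℂ) a * b)‖ < 1 := by
  have h := norm_pos_iff.2 (bzz_ne ha hb)
  rw [norm_div, div_lt_one h]
  have := bzz_id a b
  have h3 := bzz_pos ha hb
  exact lt_of_pow_lt_pow_left₀ 2 h.le (by linarith)

/-- Schwarz-Pick -/
lemma bzz_sp (g : ℂ → ℂ) (hd : ∀ z ∈ ball (0 : ℂ) 1, DifferentiableAt ℂ g z)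
    (hm : ∀ z ∈ ball (0 : ℂ) 1, ‖g z‖ < 1) {z w : ℂ} (hz : ‖z‖ < 1) (hw : ‖w‖ < 1) :
    (1 - ‖w‖ ^ 2) * (1 - ‖z‖ ^ 2) * ‖1 - (starRingEnd ℂ) (g w) * g z‖ ^ 2 ≤
    (1 - ‖g w‖ ^ 2) * (1 - ‖g z‖ ^ 2) * ‖1 - (starRingEnd ℂ) w * z‖ ^ 2 := by
  have hmw : ‖-w‖ < 1 := by simpa using hw
  set φ : ℂ → ℂ := fun ζ => (ζ - (-w)) / (1 - (starRingEnd ℂ) (-w) * ζ) with hφ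
  have hφm : ∀ ζ ∈ ball (0 : ℂ) 1, φ ζ ∈ ball (0 : ℂ) 1 := by
    intro ζ hζ
    rw [mem_ball_zero_iff] at *
    exact bzz_lt hmw hζ
  have hgw : ‖g w‖ < 1 := hm w (by simpa using hw)
  have hgz : ‖g z‖ < 1 := hm z (by simpa using hz)
  set F : ℂ → ℂ := fun ζ => (g (φ ζ) - g w) / (1 - (starRingEnd ℂ) (g w) * g (φ ζ)) with hF
  have hFd : DifferentiableOn ℂ F (ball 0 1) := by
    intro ζ hζ
    apply DifferentiableAt.differentiableWithinAt
    have h1 : DifferentiableAt ℂ φ ζ := by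
      apply DifferentiableAt.div (by fun_prop) (by fun_prop)
      exact bzz_ne hmw (by simpa using hζ)
    have h2 : DifferentiableAt ℂ (fun ζ => g (φ ζ)) ζ :=
      DifferentiableAt.comp ζ (hd _ (hφm ζ hζ)) h1
    apply DifferentiableAt.div (h2.sub_const _) ((h2.const_mul _).const_sub _)
    exact bzz_ne hgw (hm _ (hφm ζ hζ))
  have hF0 : F 0 = 0 := by simp [hF, hφ]
  have hFm : Set.MapsTo F (ball 0 1) (closedBall 0 1) := by
    intro ζ hζ
    rw [mem_closedBall_zero_iff]
    exact (bzz_lt hgw (hm _ (hφm ζ hζ))).le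
  have hne := bzz_ne hw hz
  have key := Complex.norm_le_norm_of_mapsTo_ball hFd hFm hF0 (bzz_lt hw hz)
  have hφz : φ ((z - w) / (1 - (starRingEnd ℂ) w * z)) = z := by
    have hww := bzz_ne hw hw
    have e1 : (z - w) / (1 - (starRingEnd ℂ) w * z) - (-w)
        = z * (1 - (starRingEnd ℂ) w * w) / (1 - (starRingEnd ℂ) w * z) := by
      rw [eq_div_iff hne, sub_mul, div_mul_cancel₀ _ hne]; ring
    have e2 : 1 - (starRingEnd ℂ) (-w) * ((z - w) / (1 - (starRingEnd ℂ) w * z))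
        = (1 - (starRingEnd ℂ) w * w) / (1 - (starRingEnd ℂ) w * z) := by
      rw [eq_div_iff hne, sub_mul, mul_assoc, div_mul_cancel₀ _ hne, map_neg]; ring
    simp only [hφ]
    rw [e1, e2, div_div_div_cancel_right₀ hne, mul_div_assoc, div_self hww, mul_one]
  simp only [hF] at key
  rw [hφz, norm_div, norm_div, div_le_div_iff₀ (norm_pos_iff.2 (bzz_ne hgw hgz))
    (norm_pos_iff.2 hne)] at key
  have k2 := pow_le_pow_left₀ (by positivity) key 2
  rw [← bzz_id, ← bzz_id]
  nlinarith

/-- Julia inequality -/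
lemma bzz_julia (f : ℂ → ℂ)
    (hf_diff : ∀ z ∈ Metric.ball (0 : ℂ) 1, DifferentiableAt ℂ f z)
    (hf_maps : ∀ z ∈ Metric.ball (0 : ℂ) 1, ‖f z‖ < 1)
    (z : ℕ → ℂ) (hz_mem : ∀ n, ‖z n‖ < 1)
    (hz_lim : Tendsto z atTop (nhds 1)) (hf_lim : Tendsto (fun n => f (z n)) atTop (nhds 1))
    (hr : Tendsto (fun n => (1 - ‖f (z n)‖ ^ 2) / (1 - ‖z n‖ ^ 2)) atTop (nhds 1))
    (w : ℂ) (hw : ‖w‖ < 1) :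
    (1 - ‖w‖ ^ 2) * ‖1 - f w‖ ^ 2 ≤ (1 - ‖f w‖ ^ 2) * ‖1 - w‖ ^ 2 := by
  have l1 : Tendsto (fun n => (1 - ‖w‖ ^ 2) * ‖1 - (starRingEnd ℂ) (f (z n)) * f w‖ ^ 2) atTop
      (nhds ((1 - ‖w‖ ^ 2) * ‖1 - (starRingEnd ℂ) 1 * f w‖ ^ 2)) :=
    ((((((Complex.continuous_conj.tendsto 1).comp hf_lim).mul_const (f w)).const_sub 1).norm).pow
      2).const_mul _
  have l2 : Tendsto (fun n => (1 - ‖f (z n)‖ ^ 2) / (1 - ‖z n‖ ^ 2) *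
      ((1 - ‖f w‖ ^ 2) * ‖1 - (starRingEnd ℂ) (z n) * w‖ ^ 2)) atTop
      (nhds (1 * ((1 - ‖f w‖ ^ 2) * ‖1 - (starRingEnd ℂ) 1 * w‖ ^ 2))) :=
    hr.mul (((((((Complex.continuous_conj.tendsto 1).comp hz_lim).mul_const w).const_sub 1).norm).pow
      2).const_mul _)
  have := le_of_tendsto_of_tendsto' l1 l2 (fun n => ?_)
  · simpa using this
  · have h := bzz_sp f hf_diff hf_maps hw (hz_mem n)
    have hp : 0 < 1 - ‖z n‖ ^ 2 := by nlinarith [hz_mem n, norm_nonneg (z n)]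
    rw [div_mul_eq_mul_div, le_div_iff₀ hp]
    linarith

lemma bzz_re (u v : ℂ) (hu : ‖u‖ < 1) (hv : ‖v‖ < 1)
    (h : (1 - ‖u‖ ^ 2) * ‖1 - v‖ ^ 2 ≤ (1 - ‖v‖ ^ 2) * ‖1 - u‖ ^ 2) :
    0 ≤ (2 * (v - u) / ((1 - v) * (1 - u))).re := by
  rw [Complex.div_re, ← add_div]
  apply div_nonneg _ (Complex.normSq_nonneg _)
  simp only [← Complex.normSq_eq_norm_sq, Complex.normSq_apply, Complex.sub_re, Complex.sub_im,
    Complex.mul_re, Complex.mul_im, Complex.one_re, Complex.re_ofNat, Complex.im_ofNat,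
    Complex.one_im] at h ⊢
  nlinarith

lemma bzz_one_ne {u : ℂ} (hu : ‖u‖ < 1) : 1 - u ≠ 0 := by
  intro h
  rw [← sub_eq_zero.1 h] at hu
  simp at hu

lemma bzz_one_add {h : ℂ} (hh : 0 ≤ h.re) : 1 ≤ ‖1 + h‖ := by
  have := Complex.re_le_norm (1 + h)
  simp at this
  linarith

lemma bzz_cayley {h : ℂ} (hh : 0 ≤ h.re) : ‖(1 - h) / (1 + h)‖ ≤ 1 := by
  have h1 := bzz_one_add hh
  rw [norm_div, div_le_one (by linarith)]
  apply le_of_sq_le_sq _ (by linarith)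
  simp only [← Complex.normSq_eq_norm_sq, Complex.normSq_apply, Complex.sub_re, Complex.sub_im,
    Complex.one_re, Complex.one_im, Complex.add_re, Complex.add_im]
  nlinarith

lemma bzz_cayley_sub {h : ℂ} (hh : 0 ≤ h.re) : ‖1 - (1 - h) / (1 + h)‖ ≤ 2 * ‖h‖ := by
  have h1 := bzz_one_add hh
  have h0 : 1 + h ≠ 0 := norm_pos_iff.1 (by linarith)
  have : 1 - (1 - h) / (1 + h) = 2 * h / (1 + h) := by
    field_simp; ring
  rw [this, norm_div, norm_mul, Complex.norm_ofNat]
  exact div_le_self (by positivity) h1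

theorem baracco_zaitsev_zampieri (f : ℂ → ℂ)
    (hf_diff : ∀ z ∈ Metric.ball (0 : ℂ) 1, DifferentiableAt ℂ f z)
    (hf_maps : ∀ z ∈ Metric.ball (0 : ℂ) 1, ‖f z‖ < 1)
    (z : ℕ → ℂ) (hz_mem : ∀ n, z n ∈ Metric.ball (0 : ℂ) 1)
    (hz_lim : Tendsto z atTop (nhds 1))
    (M : ℝ) (hM : 0 < M) (hz_nt : ∀ n, ‖1 - z n‖ ≤ M * (1 - ‖z n‖))
    (hlittleo : Tendsto (fun n => (f (z n) - z n) / ((‖1 - z n‖ ^ 3 : ℝ) : ℂ))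
      atTop (nhds 0)) :
    ∀ w ∈ Metric.ball (0 : ℂ) 1, f w = w := by
  have hz1 : ∀ n, ‖z n‖ < 1 := fun n => by simpa using hz_mem n
  have hf1 : ∀ n, ‖f (z n)‖ < 1 := fun n => hf_maps _ (hz_mem n)
  set q : ℕ → ℝ := fun n => ‖(f (z n) - z n) / ((‖1 - z n‖ ^ 3 : ℝ) : ℂ)‖ with hqdef
  have hq : Tendsto q atTop (nhds 0) := by
    have := hlittleo.norm
    rwa [norm_zero] at this
  have hq0 : ∀ n, 0 ≤ q n := fun n => norm_nonneg _
  have hd0 : ∀ n, 0 < ‖1 - z n‖ := fun n => norm_pos_iff.2 (bzz_one_ne (hz1 n))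
  have hfq : ∀ n, ‖f (z n) - z n‖ = q n * ‖1 - z n‖ ^ 3 := by
    intro n
    have := hd0 n
    simp only [hqdef]
    rw [norm_div, Complex.norm_real, Real.norm_of_nonneg (by positivity), div_mul_cancel₀]
    positivity
  have hd : Tendsto (fun n => ‖1 - z n‖) atTop (nhds 0) := by
    simpa using (hz_lim.const_sub 1).norm
  have hdiff : Tendsto (fun n => f (z n) - z n) atTop (nhds 0) := by
    rw [tendsto_zero_iff_norm_tendsto_zero]
    simp only [hfq]
    simpa using hq.mul (hd.pow 3)
  have hf_lim : Tendsto (fun n => f (z n)) atTop (nhds 1) := by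
    simpa using hdiff.add hz_lim
  have hr : Tendsto (fun n => (1 - ‖f (z n)‖ ^ 2) / (1 - ‖z n‖ ^ 2)) atTop (nhds 1) := by
    rw [tendsto_iff_norm_sub_tendsto_zero]
    have hb : Tendsto (fun n => 2 * M * (q n * ‖1 - z n‖ ^ 2)) atTop (nhds 0) := by
      simpa using (hq.mul (hd.pow 2)).const_mul (2 * M)
    refine squeeze_zero (fun n => norm_nonneg _) (fun n => ?_) hb
    have h0 := norm_nonneg (z n)
    have h0' := norm_nonneg (f (z n))
    have hp : 0 < 1 - ‖z n‖ ^ 2 := by nlinarith [hz1 n]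
    have e : (1 - ‖f (z n)‖ ^ 2) / (1 - ‖z n‖ ^ 2) - 1
        = (‖z n‖ - ‖f (z n)‖) * (‖z n‖ + ‖f (z n)‖) / (1 - ‖z n‖ ^ 2) := by
      field_simp; ring
    rw [e, norm_div, norm_mul, Real.norm_of_nonneg hp.le, div_le_iff₀ hp,
      Real.norm_of_nonneg (by positivity : 0 ≤ ‖z n‖ + ‖f (z n)‖), Real.norm_eq_abs]
    have a1 : |‖z n‖ - ‖f (z n)‖| ≤ q n * ‖1 - z n‖ ^ 3 := by
      rw [← hfq, norm_sub_rev]; exact abs_norm_sub_norm_le _ _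
    have a2 : ‖1 - z n‖ ≤ M * (1 - ‖z n‖ ^ 2) := by
      refine (hz_nt n).trans (mul_le_mul_of_nonneg_left ?_ hM.le)
      nlinarith [hz1 n]
    have a3 : ‖z n‖ + ‖f (z n)‖ ≤ 2 := by linarith [hz1 n, hf1 n]
    calc _ ≤ (q n * ‖1 - z n‖ ^ 3) * 2 := by
          apply mul_le_mul a1 a3 (by positivity)
          have := hq0 n
          positivity
      _ = 2 * (q n * ‖1 - z n‖ ^ 2) * ‖1 - z n‖ := by ring
      _ ≤ 2 * (q n * ‖1 - z n‖ ^ 2) * (M * (1 - ‖z n‖ ^ 2)) := by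
          apply mul_le_mul_of_nonneg_left a2
          have := hq0 n
          positivity
      _ = _ := by ring
  set h : ℂ → ℂ := fun w => 2 * (f w - w) / ((1 - f w) * (1 - w)) with hh
  have hre : ∀ w ∈ ball (0 : ℂ) 1, 0 ≤ (h w).re := by
    intro w hw
    have hw' : ‖w‖ < 1 := by simpa using hw
    exact bzz_re w (f w) hw' (hf_maps w hw)
      (bzz_julia f hf_diff hf_maps z hz1 hz_lim hf_lim hr w hw')
  have hhd : ∀ w ∈ ball (0 : ℂ) 1, DifferentiableAt ℂ h w := by
    intro w hw
    have := hf_diff w hw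
    apply DifferentiableAt.div (by fun_prop) (by fun_prop)
    exact mul_ne_zero (bzz_one_ne (hf_maps w hw)) (bzz_one_ne (by simpa using hw))
  have h1ne : ∀ w ∈ ball (0 : ℂ) 1, 1 + h w ≠ 0 := fun w hw =>
    norm_pos_iff.1 (by linarith [bzz_one_add (hre w hw)])
  set p : ℂ → ℂ := fun w => (1 - h w) / (1 + h w) with hp
  have hpd : ∀ w ∈ ball (0 : ℂ) 1, DifferentiableAt ℂ p w := by
    intro w hw
    have := hhd w hw
    exact DifferentiableAt.div (by fun_prop) (by fun_prop) (h1ne w hw)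
  have hp1 : ∀ w ∈ ball (0 : ℂ) 1, ‖p w‖ ≤ 1 := fun w hw => bzz_cayley (hre w hw)
  -- the estimate along the sequence
  have hest : ∀ᶠ n in atTop, ‖1 - p (z n)‖ ≤ 8 * q n * ‖1 - z n‖ := by
    have hs : Tendsto (fun n => q n * ‖1 - z n‖ ^ 2) atTop (nhds 0) := by
      simpa using hq.mul (hd.pow 2)
    filter_upwards [hs.eventually_le_const (show (0 : ℝ) < 1 / 2 by norm_num)] with n hn
    refine (bzz_cayley_sub (hre _ (hz_mem n))).trans ?_
    have hD := hd0 n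
    have hF : ‖1 - z n‖ / 2 ≤ ‖1 - f (z n)‖ := by
      have t : ‖1 - z n‖ ≤ ‖1 - f (z n)‖ + ‖f (z n) - z n‖ := by
        refine le_trans (le_of_eq ?_) (norm_add_le _ _)
        congr 1; ring
      rw [hfq] at t
      nlinarith
    have hFp : 0 < ‖1 - f (z n)‖ := by linarith
    have : ‖h (z n)‖ ≤ 4 * q n * ‖1 - z n‖ := by
      simp only [hh]
      rw [norm_div, norm_mul, norm_mul, hfq, Complex.norm_ofNat, div_le_iff₀ (by positivity)]
      have : 0 ≤ q n * ‖1 - z n‖ ^ 2 := mul_nonneg (hq0 n) (by positivity)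
      nlinarith [mul_le_mul_of_nonneg_left hF this]
    linarith
  by_cases hc : ∃ c ∈ ball (0 : ℂ) 1, ‖p c‖ = 1
  · obtain ⟨c, hcU, hc1⟩ := hc
    have hconst := Complex.eqOn_of_isPreconnected_of_isMaxOn_norm
      (convex_ball (0 : ℂ) 1).isPreconnected isOpen_ball
      (fun w hw => (hpd w hw).differentiableWithinAt) hcU
      (fun w hw => by simpa [hc1] using hp1 w hw)
    have hpc : ∀ w ∈ ball (0 : ℂ) 1, p w = p c := fun w hw => hconst hw
    have hle : ‖1 - p c‖ ≤ 0 := by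
      have l2 : Tendsto (fun n => 8 * q n * ‖1 - z n‖) atTop (nhds 0) := by
        simpa using (hq.const_mul 8).mul hd
      refine ge_of_tendsto l2 ?_
      filter_upwards [hest] with n hn
      rwa [hpc _ (hz_mem n)] at hn
    have hpc1 : p c = 1 := (sub_eq_zero.1 (norm_le_zero_iff.1 hle)).symm
    intro w hw
    have e := (hpc w hw).trans hpc1
    simp only [hp] at e
    rw [div_eq_one_iff_eq (h1ne w hw)] at e
    have e0 : h w = 0 := by linear_combination (-1 / 2) * e
    simp only [hh] at e0
    rw [div_eq_zero_iff] at e0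
    rcases e0 with e0 | e0
    · linear_combination (1 / 2) * e0
    · exact absurd e0
        (mul_ne_zero (bzz_one_ne (hf_maps w hw)) (bzz_one_ne (by simpa using hw)))
  · exfalso
    push Not at hc
    have hplt : ∀ w ∈ ball (0 : ℂ) 1, ‖p w‖ < 1 := fun w hw => lt_of_le_of_ne (hp1 w hw) (hc w hw)
    have h00 : (0 : ℂ) ∈ ball (0 : ℂ) 1 := by simp
    have hp0 := hplt 0 h00
    have hle : (1 - ‖p 0‖) ^ 2 ≤ 0 := by
      have l2 : Tendsto (fun n => 16 * M * q n) atTop (nhds 0) := by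
        simpa using hq.const_mul (16 * M)
      refine ge_of_tendsto l2 ?_
      filter_upwards [hest] with n hn
      have sp := bzz_sp p hpd hplt (hz1 n) (w := 0) (by simp)
      simp only [norm_zero, map_zero, zero_mul, sub_zero, norm_one, one_pow, mul_one] at sp
      norm_num at sp
      have hzn := hz1 n
      have hz0 := norm_nonneg (z n)
      have hpn := hplt _ (hz_mem n)
      have hpn0 := norm_nonneg (p (z n))
      have hp00 := norm_nonneg (p 0)
      have b1 : 1 - ‖p 0‖ ≤ ‖1 - (starRingEnd ℂ) (p 0) * p (z n)‖ := by
        have := norm_sub_norm_le (1 : ℂ) ((starRingEnd ℂ) (p 0) * p (z n))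
        rw [norm_mul, norm_one, RCLike.norm_conj] at this
        nlinarith
      have b2 : (1 - ‖p 0‖) ^ 2 ≤ ‖1 - (starRingEnd ℂ) (p 0) * p (z n)‖ ^ 2 :=
        pow_le_pow_left₀ (by linarith) b1 2
      have b3 : 1 - ‖p (z n)‖ ≤ ‖1 - p (z n)‖ := by
        simpa using norm_sub_norm_le (1 : ℂ) (p (z n))
      have b4 : (1 - ‖z n‖) * (1 - ‖p 0‖) ^ 2 ≤
          (1 - ‖z n‖ ^ 2) * ‖1 - (starRingEnd ℂ) (p 0) * p (z n)‖ ^ 2 :=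
        mul_le_mul (by nlinarith) b2 (by positivity) (by nlinarith)
      have b5 : (1 - ‖p 0‖ ^ 2) * (1 - ‖p (z n)‖ ^ 2) ≤ 1 * (2 * ‖1 - p (z n)‖) :=
        mul_le_mul (by nlinarith) (by nlinarith) (by nlinarith) (by norm_num)
      have b6 : 8 * q n * ‖1 - z n‖ ≤ 8 * q n * (M * (1 - ‖z n‖)) :=
        mul_le_mul_of_nonneg_left (hz_nt n) (by linarith [hq0 n])
      have b7 : (1 - ‖z n‖) * (1 - ‖p 0‖) ^ 2 ≤ (1 - ‖z n‖) * (16 * M * q n) := by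
        linarith
      exact le_of_mul_le_mul_left b7 (by linarith)
    nlinarith
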